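/- Let Y be a càdlàg function from [0,∞) to ℝⁿ and let (W, L) be a solution pair of the Skorohod problem for Y. Then for every k ∈ {1,…,n} and every t ≥ 0, L_k(t) = sup_{0≤s≤t} max( ∑_{j=1}^n p_{jk} L_j(s) − Y_k(s), 0 ). -/

import Mathlib

/-!
The Skorohod equation in coordinate `k` reads `∑ j, P j k * L j - Y k = L k - W k`. Since `W k ≥ 0`
and `L k` is nonnegative and nondecreasing, `L k t` bounds the right-hand side from above.

Conversely, let `c ≥ 0` be the supremum and suppose `c < L k t`. At every `s ≤ t` with `L k s > c`
the bound `L k s - W k s ≤ c` forces `W k s > 0`, so by the complementarity condition the measure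
`dL k` does not charge `{s ≤ t | c < L k s}`. This contradicts
`lsMeasure_superlevel_pos`: a nondecreasing function that rises above level `c` by time `t` does so
by putting mass on its superlevel set.
-/


open MeasureTheory Filter Topology

open Classical in
noncomputable def lsMeasure (f : ℝ → ℝ) : Measure ℝ :=
  if h : Monotone f ∧ ∀ x, ContinuousWithinAt f (Set.Ici x) x then
    StieltjesFunction.measure ⟨f, h.1, h.2⟩
  else 0

noncomputable def extZero (f : ℝ → ℝ) : ℝ → ℝ := fun t => if t < 0 then 0 else f t

def Cadlag {n : ℕ} (X : ℝ → Fin n → ℝ) : Prop :=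
  (∀ t : ℝ, 0 ≤ t → ContinuousWithinAt X (Set.Ici t) t) ∧
  (∀ t : ℝ, 0 < t → ∃ l : Fin n → ℝ, Filter.Tendsto X (nhdsWithin t (Set.Iio t)) (nhds l))

structure IsSolutionPair {n : ℕ} (R : Matrix (Fin n) (Fin n) ℝ)
    (X W L : ℝ → Fin n → ℝ) : Prop where
  eqn : ∀ t : ℝ, 0 ≤ t → W t = X t + R.mulVec (L t)
  nonnegL : ∀ (i : Fin n) (t : ℝ), 0 ≤ t → 0 ≤ L t i
  monoL : ∀ i : Fin n, MonotoneOn (fun t => L t i) (Set.Ici (0 : ℝ))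
  rcL : ∀ (i : Fin n) (t : ℝ), 0 ≤ t → ContinuousWithinAt (fun s => L s i) (Set.Ici t) t
  nonnegW : ∀ (i : Fin n) (t : ℝ), 0 ≤ t → 0 ≤ W t i
  flat : ∀ i : Fin n, lsMeasure (extZero fun t => L t i) {t : ℝ | 0 ≤ t ∧ 0 < W t i} = 0

theorem extZero_monotone {f : ℝ → ℝ} (h0 : ∀ t, 0 ≤ t → 0 ≤ f t)
    (hm : MonotoneOn f (Set.Ici 0)) : Monotone (extZero f) := by
  intro a b hab
  unfold extZero
  split_ifs with ha hb hb
  · exact le_rfl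
  · exact h0 b (not_lt.1 hb)
  · linarith
  · exact hm (not_lt.1 ha) (not_lt.1 hb) hab

theorem extZero_rightCont {f : ℝ → ℝ}
    (hr : ∀ t, 0 ≤ t → ContinuousWithinAt f (Set.Ici t) t) (x : ℝ) :
    ContinuousWithinAt (extZero f) (Set.Ici x) x := by
  rcases lt_or_ge x 0 with hx | hx
  · have : ContinuousAt (extZero f) x := by
      refine (continuousAt_const (y := (0 : ℝ))).congr ?_
      filter_upwards [Iio_mem_nhds hx] with y hy
      exact (if_pos hy).symm
    exact this.continuousWithinAt
  · exact (hr x hx).congr (fun y hy => if_neg (not_lt.2 (hx.trans hy))) (if_neg (not_lt.2 hx))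

/-- The measure of a nondecreasing function charges its superlevel set at a level `c` that is
exceeded at `t`, up to time `t`. That set is `[τ, t]` or `(τ, t]` with `τ` its infimum, and its
mass is at least `F t - c` because `F ≤ c` before `τ`, respectively up to and including `τ`. -/
theorem lsMeasure_superlevel_pos {F : ℝ → ℝ} (hF : Monotone F)
    (hr : ∀ x, ContinuousWithinAt F (Set.Ici x) x) {a c t : ℝ} (ha : F a ≤ c) (hc : c < F t) :
    0 < lsMeasure F {s | s ≤ t ∧ c < F s} := by
  set A : Set ℝ := {s | s ≤ t ∧ c < F s} with hA
  have htA : t ∈ A := ⟨le_rfl, hc⟩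
  have hbdd : BddBelow A := ⟨a, fun s hs => by
    by_contra! hlt
    linarith [hF hlt.le, hs.2]⟩
  have hbelow : ∀ s, s < sInf A → F s ≤ c := fun s hs => by
    by_contra! hlt
    have hst : s ≤ t := hs.le.trans (csInf_le hbdd htA)
    exact absurd (csInf_le hbdd (show s ∈ A from ⟨hst, hlt⟩)) (not_le.2 hs)
  have habove : ∀ s, sInf A < s → c < F s := fun s hs => by
    obtain ⟨u, hu, hus⟩ := exists_lt_of_csInf_lt ⟨t, htA⟩ hs
    exact hu.2.trans_le (hF hus.le)
  rw [lsMeasure, dif_pos ⟨hF, hr⟩]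
  by_cases hτ : sInf A ∈ A
  · have hsub : Set.Icc (sInf A) t ⊆ A := fun s hs => ⟨hs.2, hτ.2.trans_le (hF hs.1)⟩
    refine lt_of_lt_of_le ?_ (measure_mono hsub)
    rw [StieltjesFunction.measure_Icc, ENNReal.ofReal_pos, sub_pos]
    refine lt_of_le_of_lt ?_ hc
    exact le_of_tendsto (hF.tendsto_leftLim _)
      (eventually_nhdsWithin_of_forall fun s hs => hbelow s hs)
  · have hsub : Set.Ioc (sInf A) t ⊆ A := fun s hs => ⟨hs.2, habove s hs.1⟩
    refine lt_of_lt_of_le ?_ (measure_mono hsub)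
    rw [StieltjesFunction.measure_Ioc, ENNReal.ofReal_pos, sub_pos]
    refine lt_of_le_of_lt ?_ hc
    by_contra! hlt
    exact hτ ⟨csInf_le hbdd htA, hlt⟩

/-- The regulator satisfies L_k(t) = sup_{0 ≤ s ≤ t} max(∑_j p_{jk} L_j(s) - Y_k(s), 0). -/
theorem skorohod_regulator_sup_formula
    {n : ℕ} (hn : 0 < n) (P : Matrix (Fin n) (Fin n) ℝ)
    (hPnonneg : ∀ i j, 0 ≤ P i j)
    (hPpow : Filter.Tendsto (fun k : ℕ => P ^ k) Filter.atTop (nhds 0))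
    (Y W L : ℝ → Fin n → ℝ) (hY : Cadlag Y)
    (h : IsSolutionPair (1 - P.transpose) Y W L) :
    ∀ (k : Fin n) (t : ℝ), 0 ≤ t →
      L t k = sSup ((fun s => max ((∑ j : Fin n, P j k * L s j) - Y s k) 0) '' Set.Icc 0 t) := by
  intro k t ht
  have key : ∀ s, 0 ≤ s → (∑ j : Fin n, P j k * L s j) - Y s k = L s k - W s k := fun s hs => by
    have := congrFun (h.eqn s hs) k
    simp only [Matrix.sub_mulVec, Matrix.one_mulVec, Pi.add_apply, Pi.sub_apply, Matrix.mulVec,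
      dotProduct, Matrix.transpose_apply] at this
    linarith
  have hub : ∀ x ∈ (fun s => max ((∑ j : Fin n, P j k * L s j) - Y s k) 0) '' Set.Icc 0 t,
      x ≤ L t k := by
    rintro _ ⟨s, hs, rfl⟩
    refine max_le ?_ (h.nonnegL k t ht)
    rw [key s hs.1]
    have h1 : L s k ≤ L t k := h.monoL k hs.1 ht hs.2
    linarith [h.nonnegW k s hs.1]
  refine le_antisymm ?_ (csSup_le (Set.Nonempty.image _ ⟨t, ht, le_rfl⟩) hub)
  by_contra! hlt
  set c := sSup ((fun s => max ((∑ j : Fin n, P j k * L s j) - Y s k) 0) '' Set.Icc 0 t)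
  have hle : ∀ s, 0 ≤ s → s ≤ t → max ((∑ j : Fin n, P j k * L s j) - Y s k) 0 ≤ c :=
    fun s h0 h1 => le_csSup ⟨_, hub⟩ ⟨s, ⟨h0, h1⟩, rfl⟩
  have hc0 : 0 ≤ c := (le_max_right _ _).trans (hle t ht le_rfl)
  have hpos := lsMeasure_superlevel_pos (F := extZero fun t => L t k) (a := -1) (c := c) (t := t)
    (extZero_monotone (h.nonnegL k) (h.monoL k)) (extZero_rightCont (h.rcL k))
    (by simpa [extZero] using hc0) (by simpa [extZero, not_lt.2 ht] using hlt)
  refine hpos.ne' (measure_mono_null ?_ (h.flat k))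
  rintro s ⟨hst, hs⟩
  -- The extension by zero stays at `0 ≤ c` on negative times, so `s` is nonnegative.
  have hs0 : 0 ≤ s := by
    by_contra! hneg
    simp only [extZero, if_pos hneg] at hs
    linarith
  simp only [extZero, if_neg (not_lt.2 hs0)] at hs
  have h1 := (le_max_left _ _).trans (hle s hs0 hst)
  rw [key s hs0] at h1
  exact ⟨hs0, by linarith⟩
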